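/- arXiv:0910.0513 — 4 statements merged into one kernel-verified Lean document; each statement's English description precedes it below -/
import Mathlib

section
/- Let P = (p_{ij}) be an n×n row-stochastic matrix (p_{ij} ≥ 0 and ∑_{j=1}^n p_{ij} = 1 for every i), and let π ∈ ℝ^n be strictly positive with ∑_{i=1}^n π_i = 1 and π_j = ∑_{i=1}^n p_{ij}·π_i for every j (a stationary distribution of P). Define x_{ij} = p_{ij}·π_i/π_j. Then: (a) for every agent i, the bundle (x_{ij})_{j=1}^n maximizes the Cobb-Douglas utility u_i(y) = ∏_{j=1}^n y_j^{p_{ij}} over the budget set {y ∈ ℝ^n : y_j ≥ 0 for all j and ∑_{j=1}^n π_j·y_j ≤ π_i}; and (b) for every good j, ∑_{i=1}^n x_{ij} = 1. Hence π is an Arrow-Debreu equilibrium of the Cobb-Douglas exchange market in which trader i is initially endowed with one unit of good i (and nothing else) and has utility u_i. -/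
/-!
Optimality is the weighted AM-GM inequality with weights `P i j`, applied to the ratios
`z j = y j / x j` with `x j = P i j * π i / π j`. Spending on good `j` at the bundle `x` is
`P i j * π i`, so `P i j * z j ≤ π j * y j / π i`, and the budget constraint gives
`∏ j, z j ^ P i j ≤ ∑ j, P i j * z j ≤ 1`; multiplying by the utility of `x` concludes.
Goods with `P i j = 0` contribute the factor `1` to both utilities. Market clearing is the
stationarity equation divided by `π j`.
-/

/-- For a row-stochastic matrix `P` with strictly positive stationary
distribution `π`, the bundle `x i j = P i j * π i / π j` (a) maximizes trader `i`'s
Cobb-Douglas utility `∏ j, y j ^ P i j` over his budget set (budget `π i`, since he is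
endowed with one unit of good `i`), and (b) clears the market: `∑ i, x i j = 1` for every
good `j`. Hence `π` is an Arrow-Debreu equilibrium of this Cobb-Douglas exchange market. -/
theorem stationary_distribution_is_cobbDouglas_equilibrium
    (n : ℕ) (P : Fin n → Fin n → ℝ) (hP : ∀ i j, 0 ≤ P i j)
    (hProw : ∀ i, ∑ j, P i j = 1)
    (π : Fin n → ℝ) (hπ : ∀ i, 0 < π i) (hπsum : ∑ i, π i = 1)
    (hstat : ∀ j, π j = ∑ i, P i j * π i) :
    (∀ i, ∀ y : Fin n → ℝ, (∀ j, 0 ≤ y j) → (∑ j, π j * y j ≤ π i) →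
      ∏ j, (y j) ^ (P i j) ≤ ∏ j, (P i j * π i / π j) ^ (P i j)) ∧
    (∀ j, ∑ i, P i j * π i / π j = 1) := by
  constructor
  · intro i y hy hbudget
    have hi := hπ i
    have hx : ∀ j, 0 ≤ P i j * π i / π j := fun j =>
      div_nonneg (mul_nonneg (hP i j) hi.le) (hπ j).le
    have hz : ∀ j, 0 ≤ y j / (P i j * π i / π j) := fun j => div_nonneg (hy j) (hx j)
    have hfactor : ∀ j, (y j) ^ (P i j) =
        (y j / (P i j * π i / π j)) ^ (P i j) * (P i j * π i / π j) ^ (P i j) := by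
      intro j
      rcases (hP i j).eq_or_lt with h | h
      · simp [← h]
      · have hxj : 0 < P i j * π i / π j := div_pos (mul_pos h hi) (hπ j)
        rw [← Real.mul_rpow (hz j) (hx j), div_mul_cancel₀ _ hxj.ne']
    have hspend : ∀ j, P i j * (y j / (P i j * π i / π j)) ≤ π j * y j / π i := by
      intro j
      have hj := hπ j
      rcases (hP i j).eq_or_lt with h | h
      · rw [← h, zero_mul]
        exact div_nonneg (mul_nonneg hj.le (hy j)) hi.le
      · apply le_of_eq
        field_simp
    have hmean : ∏ j, (y j / (P i j * π i / π j)) ^ (P i j) ≤ 1 := by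
      calc ∏ j, (y j / (P i j * π i / π j)) ^ (P i j)
          ≤ ∑ j, P i j * (y j / (P i j * π i / π j)) :=
            Real.geom_mean_le_arith_mean_weighted _ _ _ (fun j _ => hP i j) (hProw i)
              (fun j _ => hz j)
        _ ≤ ∑ j, π j * y j / π i := Finset.sum_le_sum fun j _ => hspend j
        _ = (∑ j, π j * y j) / π i := (Finset.sum_div _ _ _).symm
        _ ≤ 1 := (div_le_one hi).2 hbudget
    rw [Finset.prod_congr rfl fun j _ => hfactor j, Finset.prod_mul_distrib]
    exact mul_le_of_le_one_left
      (Finset.prod_nonneg fun j _ => Real.rpow_nonneg (hx j) _) hmean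
  · intro j
    rw [← Finset.sum_div, ← hstat j, div_self (hπ j).ne']
end

section
/- Let n ≥ 2, let α_{ij} > 0 for all i, j, and let ρ_i ∈ [0,1) for all i. For a strictly positive price vector π define the CES demand x_{ij}(π) = (α_{ij}^{1/(1-ρ_i)}/π_j^{1/(1-ρ_i)}) · π_i / (∑_{k=1}^n α_{ik}^{1/(1-ρ_i)}·π_k^{-ρ_i/(1-ρ_i)}). Suppose π and π' are strictly positive price vectors such that for some index l, π'_l > π_l and π'_j = π_j for all j ≠ l. Then for every j ≠ l, the aggregate demand strictly increases: ∑_{i=1}^n x_{ij}(π') > ∑_{i=1}^n x_{ij}(π). In other words, the aggregate excess demand of this CES economy has the gross substitute property. -/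
/-!
Raising the price of good `l` alone weakly raises every budget `π i`, and strictly raises that of
agent `l`. Since `-ρ i / (1 - ρ i) ≤ 0`, it weakly lowers the price index
`∑ k, α i k ^ (1 / (1 - ρ i)) * π k ^ (-ρ i / (1 - ρ i))` in the denominator of the demand. For
`j ≠ l` the remaining factor depends only on `π j` and is unchanged, so every agent's demand for
good `j` weakly increases, and agent `l`'s demand increases strictly.
-/

/-- The CES demand of agent `i` for good `j` at prices `π`, when agent `i` is endowed
with one unit of good `i` (so his budget is `π i`). -/
noncomputable def cesDemand (n : ℕ) (α : Fin n → Fin n → ℝ) (ρ : Fin n → ℝ)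
    (π : Fin n → ℝ) (i j : Fin n) : ℝ :=
  ((α i j) ^ (1 / (1 - ρ i)) / (π j) ^ (1 / (1 - ρ i))) * π i /
    (∑ k, (α i k) ^ (1 / (1 - ρ i)) * (π k) ^ (-(ρ i) / (1 - ρ i)))

/-- with strictly positive coefficients and `ρ i ∈ [0,1)`, the aggregate CES
excess demand has the gross substitute property: raising the price of good `l` alone
strictly increases the aggregate demand for every other good `j ≠ l`. -/
theorem cesDemand_gross_substitute
    (n : ℕ) (hn : 2 ≤ n) (α : Fin n → Fin n → ℝ) (hα : ∀ i j, 0 < α i j)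
    (ρ : Fin n → ℝ) (hρ0 : ∀ i, 0 ≤ ρ i) (hρ1 : ∀ i, ρ i < 1)
    (π π' : Fin n → ℝ) (hπ : ∀ j, 0 < π j) (hπ' : ∀ j, 0 < π' j)
    (l : Fin n) (hl : π l < π' l) (hrest : ∀ j, j ≠ l → π' j = π j) :
    ∀ j, j ≠ l → ∑ i, cesDemand n α ρ π i j < ∑ i, cesDemand n α ρ π' i j := by
  intro j hj
  have hle : ∀ k, π k ≤ π' k := by
    intro k
    by_cases hk : k = l
    · rw [hk]; exact hl.le
    · exact (hrest k hk).ge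
  have hcoef : ∀ i, 0 < (α i j) ^ (1 / (1 - ρ i)) / (π j) ^ (1 / (1 - ρ i)) := fun i =>
    div_pos (Real.rpow_pos_of_pos (hα i j) _) (Real.rpow_pos_of_pos (hπ j) _)
  have hindex_pos : ∀ i,
      0 < ∑ k, (α i k) ^ (1 / (1 - ρ i)) * (π' k) ^ (-(ρ i) / (1 - ρ i)) := fun i =>
    Finset.sum_pos (fun k _ => mul_pos (Real.rpow_pos_of_pos (hα i k) _)
      (Real.rpow_pos_of_pos (hπ' k) _)) ⟨l, Finset.mem_univ l⟩
  have hindex_le : ∀ i,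
      ∑ k, (α i k) ^ (1 / (1 - ρ i)) * (π' k) ^ (-(ρ i) / (1 - ρ i)) ≤
        ∑ k, (α i k) ^ (1 / (1 - ρ i)) * (π k) ^ (-(ρ i) / (1 - ρ i)) := fun i =>
    Finset.sum_le_sum fun k _ => mul_le_mul_of_nonneg_left
      (Real.rpow_le_rpow_of_nonpos (hπ k) (hle k)
        (div_nonpos_of_nonpos_of_nonneg (neg_nonpos.mpr (hρ0 i)) (sub_pos.mpr (hρ1 i)).le))
      (Real.rpow_pos_of_pos (hα i k) _).le
  apply Finset.sum_lt_sum
  · intro i _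
    unfold cesDemand
    rw [hrest j hj]
    exact div_le_div₀ (mul_pos (hcoef i) (hπ' i)).le
      (mul_le_mul_of_nonneg_left (hle i) (hcoef i).le) (hindex_pos i) (hindex_le i)
  · refine ⟨l, Finset.mem_univ l, ?_⟩
    unfold cesDemand
    rw [hrest j hj]
    exact div_lt_div₀ (mul_lt_mul_of_pos_left hl (hcoef l)) (hindex_le l)
      (mul_pos (hcoef l) (hπ' l)).le (hindex_pos l)
end

section
/- Let n ≥ 2, let α_{ij} > 0 for all i, j, and let ρ_i ∈ [0,1) for all i. Then there is at most one equilibrium of the associated CES exchange economy: if π and π' are both strictly positive vectors with ∑_i π_i = 1 = ∑_i π'_i satisfying the market-clearing conditions ∑_{i=1}^n x_{ij}(π) = 1 and ∑_{i=1}^n x_{ij}(π') = 1 for every good j, then π = π'. Hence the CES ranking with nonnegative substitution parameters has a unique ranking vector. -/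
/-- The gross substitutes estimate, with the scaling by `t` built in: if `π ≤ t • π'` with equality
at good `m`, then agent `i`'s demand for `m` shrinks at least by the ratio `π i / (t * π' i)` of
the budgets. -/
lemma cesDemand_le {n : ℕ} {α : Fin n → Fin n → ℝ} (hα : ∀ i j, 0 < α i j)
    {ρ : Fin n → ℝ} (hρ0 : ∀ i, 0 ≤ ρ i) (hρ1 : ∀ i, ρ i < 1)
    {π π' : Fin n → ℝ} (hπ : ∀ i, 0 < π i) (hπ' : ∀ i, 0 < π' i)
    {t : ℝ} (ht : 0 < t) (hle : ∀ k, π k ≤ t * π' k) {m : Fin n} (hm : π m = t * π' m)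
    (i : Fin n) :
    cesDemand n α ρ π i m ≤ cesDemand n α ρ π' i m * (π i / (t * π' i)) := by
  have hρ : 0 < 1 - ρ i := sub_pos.2 (hρ1 i)
  have hr : -(ρ i) / (1 - ρ i) ≤ 0 :=
    div_nonpos_of_nonpos_of_nonneg (neg_nonpos.2 (hρ0 i)) hρ.le
  have hexp : (1 : ℝ) / (1 - ρ i) + -(ρ i) / (1 - ρ i) = 1 := by
    field_simp
    ring
  unfold cesDemand
  have hD : t ^ (-(ρ i) / (1 - ρ i)) *
      (∑ k, (α i k) ^ (1 / (1 - ρ i)) * (π' k) ^ (-(ρ i) / (1 - ρ i))) ≤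
      ∑ k, (α i k) ^ (1 / (1 - ρ i)) * (π k) ^ (-(ρ i) / (1 - ρ i)) := by
    rw [Finset.mul_sum]
    refine Finset.sum_le_sum fun k _ => ?_
    have h := Real.rpow_le_rpow_of_nonpos (hπ k) (hle k) hr
    rw [Real.mul_rpow ht.le (hπ' k).le] at h
    have ha := (Real.rpow_pos_of_pos (hα i k) (1 / (1 - ρ i))).le
    calc _ = (α i k) ^ (1 / (1 - ρ i)) *
          (t ^ (-(ρ i) / (1 - ρ i)) * (π' k) ^ (-(ρ i) / (1 - ρ i))) := by ring
      _ ≤ _ := mul_le_mul_of_nonneg_left h ha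
  have hD' : 0 < ∑ k, (α i k) ^ (1 / (1 - ρ i)) * (π' k) ^ (-(ρ i) / (1 - ρ i)) :=
    Finset.sum_pos (fun k _ => mul_pos (Real.rpow_pos_of_pos (hα i k) _)
      (Real.rpow_pos_of_pos (hπ' k) _)) ⟨m, Finset.mem_univ m⟩
  have htt : t ^ (1 / (1 - ρ i)) * t ^ (-(ρ i) / (1 - ρ i)) = t := by
    rw [← Real.rpow_add ht, hexp, Real.rpow_one]
  rw [hm, Real.mul_rpow ht.le (hπ' m).le]
  have hA := Real.rpow_pos_of_pos (hα i m) (1 / (1 - ρ i))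
  have hP := Real.rpow_pos_of_pos (hπ' m) (1 / (1 - ρ i))
  have hT := Real.rpow_pos_of_pos ht (1 / (1 - ρ i))
  have hR := Real.rpow_pos_of_pos ht (-(ρ i) / (1 - ρ i))
  have hi := hπ i
  have hi' := hπ' i
  generalize (∑ k, (α i k) ^ (1 / (1 - ρ i)) * (π k) ^ (-(ρ i) / (1 - ρ i))) = D at *
  generalize (∑ k, (α i k) ^ (1 / (1 - ρ i)) * (π' k) ^ (-(ρ i) / (1 - ρ i))) = D' at *
  generalize (α i m) ^ (1 / (1 - ρ i)) = A at *
  generalize (π' m) ^ (1 / (1 - ρ i)) = P at *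
  generalize t ^ (1 / (1 - ρ i)) = T at *
  generalize t ^ (-(ρ i) / (1 - ρ i)) = R at *
  calc A / (T * P) * π i / D ≤ A / (T * P) * π i / (R * D') :=
        div_le_div_of_nonneg_left (by positivity) (by positivity) hD
    _ = A / P * π' i / D' * (π i / (T * R * π' i)) := by field_simp
    _ = _ := by rw [htt]

/-- with strictly positive coefficients and `ρ i ∈ [0,1)`, the CES exchange
economy has at most one equilibrium: two strictly positive market-clearing price vectors,
each normalized to sum to `1`, must coincide. Hence the CES ranking with nonnegative
substitution parameters has a unique ranking vector. -/
theorem cesEquilibrium_unique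
    (n : ℕ) (hn : 2 ≤ n) (α : Fin n → Fin n → ℝ) (hα : ∀ i j, 0 < α i j)
    (ρ : Fin n → ℝ) (hρ0 : ∀ i, 0 ≤ ρ i) (hρ1 : ∀ i, ρ i < 1)
    (π π' : Fin n → ℝ) (hπ : ∀ i, 0 < π i) (hπ' : ∀ i, 0 < π' i)
    (hπsum : ∑ i, π i = 1) (hπ'sum : ∑ i, π' i = 1)
    (hclear : ∀ j, ∑ i, cesDemand n α ρ π i j = 1)
    (hclear' : ∀ j, ∑ i, cesDemand n α ρ π' i j = 1) :
    π = π' := by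
  haveI : Nonempty (Fin n) := ⟨⟨0, by omega⟩⟩
  obtain ⟨m, hmax⟩ := Finite.exists_max fun k => π k / π' k
  obtain ⟨t, htdef⟩ : ∃ t, t = π m / π' m := ⟨_, rfl⟩
  have ht : 0 < t := htdef ▸ div_pos (hπ m) (hπ' m)
  have hm : π m = t * π' m := by rw [htdef, div_mul_cancel₀ _ (hπ' m).ne']
  have hle : ∀ k, π k ≤ t * π' k := fun k => by
    have h := hmax k
    rw [← htdef] at h
    exact (div_le_iff₀ (hπ' k)).1 h
  have hpos : ∀ i, 0 < cesDemand n α ρ π' i m := fun i => by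
    unfold cesDemand
    have hD' : 0 < ∑ k, (α i k) ^ (1 / (1 - ρ i)) * (π' k) ^ (-(ρ i) / (1 - ρ i)) :=
      Finset.sum_pos (fun k _ => mul_pos (Real.rpow_pos_of_pos (hα i k) _)
        (Real.rpow_pos_of_pos (hπ' k) _)) ⟨m, Finset.mem_univ m⟩
    exact div_pos (mul_pos (div_pos (Real.rpow_pos_of_pos (hα i m) _)
      (Real.rpow_pos_of_pos (hπ' m) _)) (hπ' i)) hD'
  have hdem := cesDemand_le hα hρ0 hρ1 hπ hπ' ht hle hm
  have hdem_le : ∀ i ∈ Finset.univ, cesDemand n α ρ π i m ≤ cesDemand n α ρ π' i m :=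
    fun i _ => (hdem i).trans (mul_le_of_le_one_right (hpos i).le
      (div_le_one_of_le₀ (hle i) (mul_pos ht (hπ' i)).le))
  have heq := (Finset.sum_eq_sum_iff_of_le hdem_le).1 ((hclear m).trans (hclear' m).symm)
  have hprop : ∀ i, π i = t * π' i := fun i => by
    refine (hle i).antisymm ?_
    have h := hdem i
    rw [heq i (Finset.mem_univ i)] at h
    exact (one_le_div (mul_pos ht (hπ' i))).1 ((le_mul_iff_one_le_right (hpos i)).1 h)
  have ht1 : t = 1 := by
    have h := hπsum
    simp_rw [hprop] at h
    rwa [← Finset.mul_sum, hπ'sum, mul_one] at h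
  funext i
  rw [hprop i, ht1, one_mul]
end

section
/- Let n ≥ 1, let ρ < 1, and let α_{ij} = 1/n for all i, j. Then a strictly positive vector π with ∑_{i=1}^n π_i = 1 satisfies the market-clearing conditions ∑_{i=1}^n x_{ij}(π) = 1 for every good j if and only if π_j = 1/n for every j. In particular, every strictly positive market-clearing π satisfies π_j = (1/∑_{k=1}^n π_k^{-ρ/(1-ρ)})^{1-ρ} for every j, an expression independent of j, so the uniform vector is the unique equilibrium. Hence the CES ranking is minimally fair: when no agent expresses any preference (all α_{ij} = 0, replaced by the uniform coefficients 1/n), all agents receive equal ranking score 1/n. -/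
/-!
Summing the demands for good `j` over all agents, the common factor `(1/n)^(1/(1-ρ))` cancels
and the budgets add up to `∑ i, π i = 1`, so aggregate demand is `(π j ^ (1/(1-ρ)) * S)⁻¹` with
`S = ∑ k, π k ^ (-ρ/(1-ρ))` (`sum_uniformCesDemand`). Market clearing for good `j` thus means
`π j = (1/S)^(1-ρ)`, which does not depend on `j`; normalization then forces `π j = 1/n`.
Conversely, at the uniform vector `π j ^ (1/(1-ρ)) * S = n * (1/n)^1 = 1`.
-/

/-- The CES demand of agent `i` for good `j` at prices `π` when all coefficients are the
uniform value `1/n`, all agents share the parameter `ρ`, and agent `i` is endowed with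
one unit of good `i` (so his budget is `π i`). -/
noncomputable def uniformCesDemand (n : ℕ) (ρ : ℝ) (π : Fin n → ℝ) (i j : Fin n) : ℝ :=
  (((1 : ℝ) / n) ^ (1 / (1 - ρ)) / (π j) ^ (1 / (1 - ρ))) * π i /
    (∑ k, ((1 : ℝ) / n) ^ (1 / (1 - ρ)) * (π k) ^ (-ρ / (1 - ρ)))

theorem priceSum_pos {n : ℕ} (hn : 1 ≤ n) (ρ : ℝ) {π : Fin n → ℝ} (hπ : ∀ i, 0 < π i) :
    0 < ∑ k, (π k) ^ (-ρ / (1 - ρ)) :=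
  Finset.sum_pos (fun k _ => Real.rpow_pos_of_pos (hπ k) _) ⟨⟨0, hn⟩, Finset.mem_univ _⟩

theorem sum_uniformCesDemand {n : ℕ} (hn : 1 ≤ n) (ρ : ℝ) {π : Fin n → ℝ}
    (hπ : ∀ i, 0 < π i) (hπsum : ∑ i, π i = 1) (j : Fin n) :
    ∑ i, uniformCesDemand n ρ π i j =
      ((π j) ^ (1 / (1 - ρ)) * ∑ k, (π k) ^ (-ρ / (1 - ρ)))⁻¹ := by
  have hS := priceSum_pos hn ρ hπ
  have hn' : (0 : ℝ) < 1 / n := by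
    have : (0 : ℝ) < n := by exact_mod_cast hn
    positivity
  have hc : 0 < ((1 : ℝ) / n) ^ (1 / (1 - ρ)) := Real.rpow_pos_of_pos hn' _
  have hp : 0 < (π j) ^ (1 / (1 - ρ)) := Real.rpow_pos_of_pos (hπ j) _
  unfold uniformCesDemand
  rw [← Finset.sum_div, ← Finset.mul_sum, ← Finset.mul_sum, hπsum]
  -- `field_simp` must see the powers and the sum as atoms.
  generalize ((1 : ℝ) / n) ^ (1 / (1 - ρ)) = c at *
  generalize (π j) ^ (1 / (1 - ρ)) = p at *
  generalize ∑ k, (π k) ^ (-ρ / (1 - ρ)) = S at *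
  field_simp

theorem price_eq_of_clears {n : ℕ} (hn : 1 ≤ n) {ρ : ℝ} (hρ : ρ < 1) {π : Fin n → ℝ}
    (hπ : ∀ i, 0 < π i) (hπsum : ∑ i, π i = 1) {j : Fin n}
    (h : ∑ i, uniformCesDemand n ρ π i j = 1) :
    π j = (1 / ∑ k, (π k) ^ (-ρ / (1 - ρ))) ^ (1 - ρ) := by
  have hS := priceSum_pos hn ρ hπ
  have hρ' : 1 - ρ ≠ 0 := by linarith
  rw [sum_uniformCesDemand hn ρ hπ hπsum, inv_eq_one] at h
  rw [← eq_div_of_mul_eq hS.ne' h, ← Real.rpow_mul (hπ j).le, one_div_mul_cancel hρ',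
    Real.rpow_one]

/-- with uniform coefficients `α i j = 1/n` and common parameter `ρ < 1`, a
strictly positive normalized price vector clears the market iff it is the uniform vector
`π j = 1/n`; moreover any strictly positive market-clearing `π` satisfies
`π j = (1 / ∑ k, π k ^ (-ρ/(1-ρ))) ^ (1-ρ)` for every `j` (an expression independent of
`j`). Hence the CES ranking is minimally fair. -/
theorem cesRanking_minimally_fair
    (n : ℕ) (hn : 1 ≤ n) (ρ : ℝ) (hρ : ρ < 1)
    (π : Fin n → ℝ) (hπ : ∀ i, 0 < π i) (hπsum : ∑ i, π i = 1) :
    ((∀ j, ∑ i, uniformCesDemand n ρ π i j = 1) ↔ (∀ j, π j = 1 / n)) ∧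
    ((∀ j, ∑ i, uniformCesDemand n ρ π i j = 1) →
      ∀ j, π j = (1 / ∑ k, (π k) ^ (-ρ / (1 - ρ))) ^ (1 - ρ)) := by
  have hn' : (0 : ℝ) < n := by exact_mod_cast hn
  have hρ' : 1 - ρ ≠ 0 := by linarith
  refine ⟨⟨fun h j => ?_, fun h j => ?_⟩,
    fun h j => price_eq_of_clears hn hρ hπ hπsum (h j)⟩
  · have hconst : ∀ i, π i = π j := fun i =>
      (price_eq_of_clears hn hρ hπ hπsum (h i)).trans
        (price_eq_of_clears hn hρ hπ hπsum (h j)).symm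
    rw [Finset.sum_congr rfl fun i _ => hconst i] at hπsum
    simp only [Finset.sum_const, Finset.card_univ, Fintype.card_fin, nsmul_eq_mul] at hπsum
    rw [eq_div_iff hn'.ne', mul_comm]
    exact hπsum
  · rw [sum_uniformCesDemand hn ρ hπ hπsum, inv_eq_one]
    simp only [h, Finset.sum_const, Finset.card_univ, Fintype.card_fin, nsmul_eq_mul]
    have hexp : 1 / (1 - ρ) + -ρ / (1 - ρ) = 1 := by
      rw [← add_div, ← sub_eq_add_neg, div_self hρ']
    rw [mul_left_comm, ← Real.rpow_add (one_div_pos.mpr hn'), hexp, Real.rpow_one,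
      mul_one_div_cancel hn'.ne']
end
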